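/- arXiv:2410.00740 — 2 statements merged into one kernel-verified Lean document; each statement's English description precedes it below -/
import Mathlib

section
/- Let 𝒟 and ℱ be categories with finite limits, 𝒞 a predicate on the objects of 𝒟 and ℰ a predicate on the objects of ℱ, and G : 𝒟 ⥤ ℱ a functor preserving finite limits. Then G satisfies the site-morphism condition from (𝒟,𝒞) to (ℱ,ℰ) if and only if G is cover-preserving for the induced topologies: for every object D of 𝒟 and every sieve S with S ∈ J_𝒞(D), the pushforward sieve Sieve.functorPushforward G S belongs to J_ℰ(G.obj D). -/
open CategoryTheory CategoryTheory.Limits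

universe v u w z

/-- The Grothendieck topology induced by a predicate `𝒞` on the objects of `𝒟`: a sieve
on `D` is covering exactly when it contains every morphism `u : C ⟶ D` with `𝒞 C`. -/
def inducedTopology {𝒟 : Type u} [Category.{v} 𝒟] (𝒞 : 𝒟 → Prop) :
    GrothendieckTopology 𝒟 where
  sieves D := {S | ∀ ⦃C : 𝒟⦄ (u : C ⟶ D), 𝒞 C → S.arrows u}
  top_mem' := by intro D C u _; trivial
  pullback_stable' := by
    intro D D' S f hS C u hC
    exact hS (u ≫ f) hC
  transitive' := by
    intro D S hS R hR C u hC
    simpa using hR (hS u hC) (𝟙 C) hC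

/-- The site-morphism condition for `G : 𝒟 ⥤ ℱ` from `(𝒟, 𝒞)` to `(ℱ, ℰ)`. -/
def SiteMorphism {𝒟 : Type u} [Category.{v} 𝒟] {ℱ : Type w} [Category.{z} ℱ]
    (𝒞 : 𝒟 → Prop) (ℰ : ℱ → Prop) (G : 𝒟 ⥤ ℱ) : Prop :=
  ∀ (D : 𝒟) (E : ℱ), ℰ E → ∀ f : E ⟶ G.obj D,
    ∃ (C : 𝒟) (_ : 𝒞 C) (g : C ⟶ D) (h : E ⟶ G.obj C), h ≫ G.map g = f

section

variable {𝒟 : Type u} [Category.{v} 𝒟] {ℱ : Type w} [Category.{z} ℱ]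

/-- The least covering sieve on `D` for `inducedTopology 𝒞`: the morphisms into `D` that factor
through an object satisfying `𝒞`. It is encoded as the sieve generated by all morphisms into `D`
whose domain satisfies `𝒞`, and reduces statements about all covering sieves to a single one. -/
def leastCoveringSieve (𝒞 : 𝒟 → Prop) (D : 𝒟) : Sieve D :=
  Sieve.generate fun C _ => 𝒞 C

theorem mem_inducedTopology_iff_leastCoveringSieve_le {𝒞 : 𝒟 → Prop} {D : 𝒟} {S : Sieve D} :
    S ∈ inducedTopology 𝒞 D ↔ leastCoveringSieve 𝒞 D ≤ S :=
  (Sieve.generate_le_iff _ S).symm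

theorem functorPushforward_leastCoveringSieve_apply {𝒞 : 𝒟 → Prop} {G : 𝒟 ⥤ ℱ} {D : 𝒟} {E : ℱ}
    {f : E ⟶ G.obj D} :
    (leastCoveringSieve 𝒞 D).functorPushforward G f ↔
      ∃ (C : 𝒟) (_ : 𝒞 C) (g : C ⟶ D) (h : E ⟶ G.obj C), h ≫ G.map g = f := by
  change (leastCoveringSieve 𝒞 D).arrows.functorPushforward G f ↔ _
  rw [leastCoveringSieve, Sieve.functorPushforward_extend_eq]
  constructor
  · rintro ⟨C, g, h, hC, hf⟩
    exact ⟨C, hC, g, h, hf.symm⟩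
  · rintro ⟨C, hC, g, h, hf⟩
    exact ⟨C, g, h, hC, hf.symm⟩

theorem siteMorphism_iff_functorPushforward_leastCoveringSieve_mem {𝒞 : 𝒟 → Prop}
    {ℰ : ℱ → Prop} {G : 𝒟 ⥤ ℱ} :
    SiteMorphism 𝒞 ℰ G ↔
      ∀ D : 𝒟, (leastCoveringSieve 𝒞 D).functorPushforward G ∈ inducedTopology ℰ (G.obj D) :=
  forall_congr' fun _ =>
    ⟨fun hG _ f hE => functorPushforward_leastCoveringSieve_apply.2 (hG _ hE f),
      fun hG _ hE f => functorPushforward_leastCoveringSieve_apply.1 (hG f hE)⟩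

theorem siteMorphism_iff_coverPreserving_general (𝒞 : 𝒟 → Prop) (ℰ : ℱ → Prop) (G : 𝒟 ⥤ ℱ) :
    SiteMorphism 𝒞 ℰ G ↔
      ∀ (D : 𝒟) (S : Sieve D), S ∈ inducedTopology 𝒞 D →
        S.functorPushforward G ∈ inducedTopology ℰ (G.obj D) := by
  rw [siteMorphism_iff_functorPushforward_leastCoveringSieve_mem]
  constructor
  · intro hG D S hS
    have hle : leastCoveringSieve 𝒞 D ≤ S := mem_inducedTopology_iff_leastCoveringSieve_le.1 hS
    exact (inducedTopology ℰ).superset_covering (Sieve.functorPushforward_monotone G D hle) (hG D)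
  · intro hG D
    exact hG D _ (mem_inducedTopology_iff_leastCoveringSieve_le.2 le_rfl)

end

/-- A finite-limit-preserving functor satisfies the site-morphism
condition from `(𝒟,𝒞)` to `(ℱ,ℰ)` iff it is cover-preserving for the induced topologies. -/
theorem siteMorphism_iff_coverPreserving {𝒟 : Type u} [Category.{v} 𝒟]
    {ℱ : Type w} [Category.{z} ℱ] [HasFiniteLimits 𝒟] [HasFiniteLimits ℱ]
    (𝒞 : 𝒟 → Prop) (ℰ : ℱ → Prop) (G : 𝒟 ⥤ ℱ) [PreservesFiniteLimits G] :
    SiteMorphism 𝒞 ℰ G ↔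
      ∀ (D : 𝒟) (S : Sieve D), S ∈ inducedTopology 𝒞 D →
        S.functorPushforward G ∈ inducedTopology ℰ (G.obj D) :=
  siteMorphism_iff_coverPreserving_general 𝒞 ℰ G
end

section
/- Let 𝒟 and ℱ be small categories with finite limits, 𝒞 a predicate on the objects of 𝒟 closed under finite limits, ℰ a predicate on the objects of ℱ closed under finite limits, and G : 𝒟 ⥤ ℱ a functor preserving finite limits that satisfies the site-morphism condition from (𝒟,𝒞) to (ℱ,ℰ). Then for every presheaf P : ℱᵒᵖ ⥤ Type that is a sheaf for the induced topology J_ℰ, the presheaf G.op ⋙ P : 𝒟ᵒᵖ ⥤ Type is a sheaf for the induced topology J_𝒞. -/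
open CategoryTheory CategoryTheory.Limits

universe v u w z

/-- A predicate on objects is closed under finite limits. -/
def ClosedUnderFiniteLimits {𝒟 : Type u} [Category.{v} 𝒟] [HasTerminal 𝒟]
    (𝒞 : 𝒟 → Prop) : Prop :=
  𝒞 (⊤_ 𝒟) ∧ ∀ {X Y Z : 𝒟} (f : X ⟶ Z) (g : Y ⟶ Z), 𝒞 X → 𝒞 Y → 𝒞 Z →
    ∃ (P : 𝒟) (_ : 𝒞 P) (a : P ⟶ X) (b : P ⟶ Y), IsPullback a b f g

/-!
Every object `D` has a smallest `J_𝒞`-cover, the sieve generated by all morphisms to `D` from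
objects satisfying `𝒞`, and the site-morphism condition says precisely that `G` carries each of
these smallest covers to a `J_ℰ`-cover. It is therefore equivalent to `G` preserving covers. A
functor preserving finite limits is representably flat, and a representably flat functor is
continuous if and only if it preserves covers.
-/

section

variable {𝒟 : Type u} [Category.{v} 𝒟] {ℱ : Type w} [Category.{z} ℱ]

/-- The smallest sieve on `D` covering for `inducedTopology 𝒞`: it consists of the morphisms that
factor through an object satisfying `𝒞`. The site-morphism condition is a condition on the images
of these sieves. -/
def minimalCover (𝒞 : 𝒟 → Prop) (D : 𝒟) : Sieve D :=
  Sieve.generate fun C _ ↦ 𝒞 C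

variable {𝒞 : 𝒟 → Prop} {ℰ : ℱ → Prop} {G : 𝒟 ⥤ ℱ}

lemma mem_inducedTopology_iff_minimalCover_le {D : 𝒟} {S : Sieve D} :
    S ∈ inducedTopology 𝒞 D ↔ minimalCover 𝒞 D ≤ S :=
  (Sieve.generate_le_iff _ S).symm

lemma minimalCover_mem_inducedTopology (D : 𝒟) : minimalCover 𝒞 D ∈ inducedTopology 𝒞 D :=
  mem_inducedTopology_iff_minimalCover_le.2 le_rfl

lemma coverPreserving_inducedTopology_left_iff {K : GrothendieckTopology ℱ} :
    CoverPreserving (inducedTopology 𝒞) K G ↔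
      ∀ D, (minimalCover 𝒞 D).functorPushforward G ∈ K (G.obj D) where
  mp hG D := hG.cover_preserve (minimalCover_mem_inducedTopology D)
  mpr hG := ⟨fun {D _} hS ↦ K.superset_covering
    (Sieve.functorPushforward_monotone G D (mem_inducedTopology_iff_minimalCover_le.1 hS)) (hG D)⟩

lemma functorPushforward_minimalCover_apply_iff {D : 𝒟} {E : ℱ} {f : E ⟶ G.obj D} :
    (minimalCover 𝒞 D).functorPushforward G f ↔
      ∃ (C : 𝒟) (_ : 𝒞 C) (g : C ⟶ D) (h : E ⟶ G.obj C), h ≫ G.map g = f := by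
  constructor
  · rintro ⟨_, _, h, ⟨C, a, g, hC, rfl⟩, rfl⟩
    exact ⟨C, hC, g, h ≫ G.map a, by simp⟩
  · rintro ⟨C, hC, g, h, rfl⟩
    exact ⟨C, g, h, Sieve.le_generate _ _ g hC, rfl⟩

lemma siteMorphism_iff_functorPushforward_minimalCover_mem :
    SiteMorphism 𝒞 ℰ G ↔
      ∀ D, (minimalCover 𝒞 D).functorPushforward G ∈ inducedTopology ℰ (G.obj D) :=
  forall_congr' fun _ ↦ forall_congr' fun _ ↦
    ⟨fun hG f hE ↦ functorPushforward_minimalCover_apply_iff.2 (hG hE f),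
      fun hG hE f ↦ functorPushforward_minimalCover_apply_iff.1 (hG f hE)⟩

theorem siteMorphism_iff_coverPreserving_s13 :
    SiteMorphism 𝒞 ℰ G ↔ CoverPreserving (inducedTopology 𝒞) (inducedTopology ℰ) G :=
  siteMorphism_iff_functorPushforward_minimalCover_mem.trans
    coverPreserving_inducedTopology_left_iff.symm

theorem siteMorphism_iff_isContinuous [RepresentablyFlat G] :
    SiteMorphism 𝒞 ℰ G ↔ G.IsContinuous (inducedTopology 𝒞) (inducedTopology ℰ) :=
  siteMorphism_iff_coverPreserving_s13.trans Functor.isContinuous_iff_coverPreserving.symm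

theorem isSheaf_comp_of_siteMorphism_general [RepresentablyFlat G] (hG : SiteMorphism 𝒞 ℰ G)
    {P : ℱᵒᵖ ⥤ Type*} (hP : Presieve.IsSheaf (inducedTopology ℰ) P) :
    Presieve.IsSheaf (inducedTopology 𝒞) (G.op ⋙ P) := by
  have : G.IsContinuous (inducedTopology 𝒞) (inducedTopology ℰ) :=
    siteMorphism_iff_isContinuous.1 hG
  exact G.op_comp_isSheaf_of_isSheaf_type _ hP

end

/-- Pulling back along a finite-limit-preserving site morphism takes
sheaves for the induced topology `J_ℰ` to sheaves for the induced topology `J_𝒞`. -/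
theorem isSheaf_comp_of_siteMorphism {𝒟 ℱ : Type u} [SmallCategory 𝒟] [SmallCategory ℱ]
    [HasFiniteLimits 𝒟] [HasFiniteLimits ℱ]
    (𝒞 : 𝒟 → Prop) (ℰ : ℱ → Prop)
    (h𝒞 : ClosedUnderFiniteLimits 𝒞) (hℰ : ClosedUnderFiniteLimits ℰ)
    (G : 𝒟 ⥤ ℱ) [PreservesFiniteLimits G] (hsite : SiteMorphism 𝒞 ℰ G)
    (P : ℱᵒᵖ ⥤ Type u) (hP : Presieve.IsSheaf (inducedTopology ℰ) P) :
    Presieve.IsSheaf (inducedTopology 𝒞) (G.op ⋙ P) := by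
  have : RepresentablyFlat G := flat_of_preservesFiniteLimits G
  exact isSheaf_comp_of_siteMorphism_general hsite hP
end
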